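/- Let d ≥ 1, x, y ∈ ℝᵈ, h > 0, κ a positive integer, n₁, …, n_κ ∈ ℝᵈ unit vectors, and τ₁, …, τ_κ > 0 with τ₁ + ⋯ + τ_κ ≤ h. Define Y₀ = y, X₀ = x, X_i = X_{i−1} + τ_i Y_{i−1}, and Y_i = Y_{i−1} − 2⟨n_i, Y_{i−1}⟩ n_i for i = 1, …, κ. Suppose there exist constants A, L > 0 and a function B : ℝᵈ → ℝᵈ such that |B(z)| ≤ A for all z ∈ ℝᵈ, B is Lipschitz with constant L, and ⟨B(X_i), n_i⟩ = 1 for i = 1, …, κ. Then Σ_{i=1}^{κ} ⟨n_i, Y_{i−1}⟩ ≤ A |y| + (L h / 2) |y|². -/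

import Mathlib

open scoped RealInnerProductSpace

/-!
Follow the quantity `⟪B (X i), Y i⟫` along the path. Since `⟪B (X (i + 1)), n i⟫ = 1`, the
reflection at `X (i + 1)` lowers it by exactly `2 * ⟪n i, Y i⟫`; the preceding flight raises it by
at most `L * τ i * ‖y‖ ^ 2`, because `B` is `L`-Lipschitz and reflections preserve the speed. Its
initial and final values lie in `[-A * ‖y‖, A * ‖y‖]`, so telescoping bounds the total loss.
-/

open Finset
open scoped NNReal

variable {E : Type*} [NormedAddCommGroup E] [InnerProductSpace ℝ E]

theorem reflection_orthogonal_span_singleton_of_norm_eq_one {n : E} (hn : ‖n‖ = 1) (v : E) :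
    (ℝ ∙ n)ᗮ.reflection v = v - (2 * ⟪n, v⟫) • n := by
  rw [Submodule.reflection_orthogonal_apply, Submodule.reflection_apply,
    Submodule.starProjection_unit_singleton ℝ hn]
  module

theorem norm_sub_two_mul_inner_smul {n : E} (hn : ‖n‖ = 1) (v : E) :
    ‖v - (2 * ⟪n, v⟫) • n‖ = ‖v‖ := by
  rw [← reflection_orthogonal_span_singleton_of_norm_eq_one hn, LinearIsometryEquiv.norm_map]

theorem two_mul_inner_eq_of_inner_eq_one {b' n : E} (hb' : ⟪b', n⟫ = 1) (b v : E) :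
    2 * ⟪n, v⟫ = ⟪b, v⟫ - ⟪b', v - (2 * ⟪n, v⟫) • n⟫ + ⟪b' - b, v⟫ := by
  rw [inner_sub_right, inner_smul_right, hb', inner_sub_left]
  ring

theorem abs_inner_le_of_norm_le {b : E} {A : ℝ} (hb : ‖b‖ ≤ A) (v : E) :
    |⟪b, v⟫| ≤ A * ‖v‖ :=
  (abs_real_inner_le_norm b v).trans (by gcongr)

theorem inner_sub_le_of_lipschitzOnWith {F : Type*} [SeminormedAddCommGroup F] {B : F → E}
    {K : ℝ≥0} {s : Set F} (hB : LipschitzOnWith K B s) {z w : F} (hz : z ∈ s) (hw : w ∈ s) (v : E) :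
    ⟪B z - B w, v⟫ ≤ K * ‖z - w‖ * ‖v‖ :=
  (real_inner_le_norm _ _).trans (by gcongr; exact hB.norm_sub_le hz hw)

/-- A billiard path with `κ` collisions: from `X i`, a particle flies for time `τ i` with velocity
`Y i` to the collision point `X (i + 1)`, where its velocity is reflected in the hyperplane
orthogonal to the unit normal `n i`. The sequences are unconstrained beyond the `κ`-th collision. -/
structure IsBilliardPath (κ : ℕ) (n : ℕ → E) (τ : ℕ → ℝ) (X Y : ℕ → E) : Prop where
  norm_normal : ∀ i < κ, ‖n i‖ = 1
  time_nonneg : ∀ i < κ, 0 ≤ τ i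
  position_succ : ∀ i < κ, X (i + 1) = X i + τ i • Y i
  velocity_succ : ∀ i < κ, Y (i + 1) = Y i - (2 * ⟪n i, Y i⟫) • n i

namespace IsBilliardPath

variable {κ : ℕ} {n : ℕ → E} {τ : ℕ → ℝ} {X Y : ℕ → E}

theorem norm_velocity (hp : IsBilliardPath κ n τ X Y) {i : ℕ} (hi : i ≤ κ) : ‖Y i‖ = ‖Y 0‖ := by
  induction i with
  | zero => rfl
  | succ i ih =>
    rw [hp.velocity_succ i hi, norm_sub_two_mul_inner_smul (hp.norm_normal i hi),
      ih (Nat.le_of_succ_le hi)]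

theorem norm_position_succ_sub (hp : IsBilliardPath κ n τ X Y) {i : ℕ} (hi : i < κ) :
    ‖X (i + 1) - X i‖ = τ i * ‖Y 0‖ := by
  rw [hp.position_succ i hi, add_sub_cancel_left, norm_smul,
    Real.norm_of_nonneg (hp.time_nonneg i hi), hp.norm_velocity hi.le]

variable {s : Set E} {B : E → E} {K : ℝ≥0}

theorem two_mul_inner_normal_velocity_le (hp : IsBilliardPath κ n τ X Y) (hXs : ∀ i ≤ κ, X i ∈ s)
    (hB : LipschitzOnWith K B s) {i : ℕ} (hi : i < κ) (hBn : ⟪B (X (i + 1)), n i⟫ = 1) :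
    2 * ⟪n i, Y i⟫ ≤
      ⟪B (X i), Y i⟫ - ⟪B (X (i + 1)), Y (i + 1)⟫ + K * ‖Y 0‖ ^ 2 * τ i := by
  have drift : ⟪B (X (i + 1)) - B (X i), Y i⟫ ≤ K * ‖Y 0‖ ^ 2 * τ i := calc
    _ ≤ K * ‖X (i + 1) - X i‖ * ‖Y i‖ :=
      inner_sub_le_of_lipschitzOnWith hB (hXs _ hi) (hXs _ hi.le) _
    _ = K * ‖Y 0‖ ^ 2 * τ i := by
      rw [hp.norm_position_succ_sub hi, hp.norm_velocity hi.le]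
      ring
  rw [two_mul_inner_eq_of_inner_eq_one hBn (B (X i)), ← hp.velocity_succ i hi]
  gcongr

theorem two_mul_sum_inner_normal_velocity_le (hp : IsBilliardPath κ n τ X Y)
    (hXs : ∀ i ≤ κ, X i ∈ s) (hB : LipschitzOnWith K B s)
    (hBn : ∀ i < κ, ⟪B (X (i + 1)), n i⟫ = 1) :
    2 * ∑ i ∈ range κ, ⟪n i, Y i⟫ ≤
      ⟪B (X 0), Y 0⟫ - ⟪B (X κ), Y κ⟫ + K * ‖Y 0‖ ^ 2 * ∑ i ∈ range κ, τ i := by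
  rw [← sum_range_sub' (fun i ↦ ⟪B (X i), Y i⟫), mul_sum, mul_sum, ← sum_add_distrib]
  refine sum_le_sum fun i hi ↦ ?_
  have hiκ : i < κ := mem_range.1 hi
  exact hp.two_mul_inner_normal_velocity_le hXs hB hiκ (hBn i hiκ)

end IsBilliardPath

theorem stmt11_general {κ : ℕ} {n : ℕ → E} {τ : ℕ → ℝ} {X Y : ℕ → E}
    (hp : IsBilliardPath κ n τ X Y) {h : ℝ} (hτsum : ∑ i ∈ range κ, τ i ≤ h)
    {s : Set E} (hXs : ∀ i ≤ κ, X i ∈ s) {B : E → E} {A : ℝ} (hBbdd : ∀ z ∈ s, ‖B z‖ ≤ A)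
    {K : ℝ≥0} (hBlip : LipschitzOnWith K B s) (hBn : ∀ i < κ, ⟪B (X (i + 1)), n i⟫ = 1) :
    ∑ i ∈ range κ, ⟪n i, Y i⟫ ≤ A * ‖Y 0‖ + (K * h / 2) * ‖Y 0‖ ^ 2 := by
  have telescoped := hp.two_mul_sum_inner_normal_velocity_le hXs hBlip hBn
  have initial_le : ⟪B (X 0), Y 0⟫ ≤ A * ‖Y 0‖ :=
    (abs_le.1 (abs_inner_le_of_norm_le (hBbdd _ (hXs 0 κ.zero_le)) _)).2
  have le_final : -(A * ‖Y 0‖) ≤ ⟪B (X κ), Y κ⟫ := by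
    rw [← hp.norm_velocity le_rfl]
    exact (abs_le.1 (abs_inner_le_of_norm_le (hBbdd _ (hXs κ le_rfl)) _)).1
  have drift_le : K * ‖Y 0‖ ^ 2 * ∑ i ∈ range κ, τ i ≤ K * ‖Y 0‖ ^ 2 * h := by gcongr
  linarith

/-- Key estimate behind the bound on the number of billiard reflections in one step:
for the billiard dynamics `X_{i} = X_{i−1} + τ_i Y_{i−1}`,
`Y_i = Y_{i−1} − 2⟨n_i, Y_{i−1}⟩ n_i` with unit normals `n_i`, positive times `τ_i` with
`τ₁ + ⋯ + τ_κ ≤ h`, and a bounded Lipschitz vector field `B` with `⟨B(X_i), n_i⟩ = 1`,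
one has `Σ_{i=1}^{κ} ⟨n_i, Y_{i−1}⟩ ≤ A |y| + (L h / 2) |y|²`.
(Indices are shifted: `n i`, `τ i` for `i = 0, …, κ−1` stand for `n_{i+1}`, `τ_{i+1}`,
and the `i`-th collision point `X_i` of the paper is `X (i)` here with `X 0 = x`.) -/
theorem stmt11 (d : ℕ) (hd : 1 ≤ d)
    (x y : EuclideanSpace ℝ (Fin d)) (h : ℝ) (hh : 0 < h)
    (κ : ℕ) (hκ : 1 ≤ κ)
    (n : ℕ → EuclideanSpace ℝ (Fin d)) (hn : ∀ i < κ, ‖n i‖ = 1)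
    (τ : ℕ → ℝ) (hτ : ∀ i < κ, 0 < τ i)
    (hτsum : ∑ i ∈ Finset.range κ, τ i ≤ h)
    (X Y : ℕ → EuclideanSpace ℝ (Fin d)) (hX0 : X 0 = x) (hY0 : Y 0 = y)
    (hX : ∀ i < κ, X (i + 1) = X i + τ i • Y i)
    (hY : ∀ i < κ, Y (i + 1) = Y i - (2 * ⟪n i, Y i⟫) • n i)
    (A L : ℝ) (hA : 0 < A) (hL : 0 < L)
    (B : EuclideanSpace ℝ (Fin d) → EuclideanSpace ℝ (Fin d))
    (hBbdd : ∀ z, ‖B z‖ ≤ A)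
    (hBlip : ∀ z w, ‖B z - B w‖ ≤ L * ‖z - w‖)
    (hBn : ∀ i < κ, ⟪B (X (i + 1)), n i⟫ = 1) :
    ∑ i ∈ Finset.range κ, ⟪n i, Y i⟫ ≤ A * ‖y‖ + (L * h / 2) * ‖y‖ ^ 2 := by
  subst hY0
  exact stmt11_general ⟨hn, fun i hi ↦ (hτ i hi).le, hX, hY⟩ hτsum (fun i _ ↦ Set.mem_univ (X i))
    (fun z _ ↦ hBbdd z) (K := ⟨L, hL.le⟩)
    (lipschitzOnWith_univ.2 (lipschitzWith_iff_norm_sub_le.2 hBlip)) hBn
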